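/- Buchsbaum–Eisenbud exactness criterion: a complex 0 → F^0 → F^1 → ⋯ → F^n of finitely generated free modules over a Noetherian commutative ring R, with differentials d^i : F^i → F^{i+1}, is exact if and only if for every i one has rank(F^i) = rank(d^{i-1}) + rank(d^i) and depth I_{rank(d^i)}(d^i) ≥ n − i, where I_r(d) denotes the ideal of r×r minors of d and the rank of a map of free modules is the largest size of a nonvanishing minor. -/

import Mathlib

/-!
Write `r k` for the expected rank `b k - b (k - 1) + ⋯ ± b 0` of `d k`. Both directions rest on
shortening the complex: if some maximal minor of `d 0`, on the rows `f`, is a unit, then the basis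
vectors of `F^1` outside `f` span a complement of the image of `d 0`, and the complex is exact if
and only if `0 → F^1 / F^0 → F^2 → ⋯` is (`exactUpTo_succ_iff_short`). The minors of `d 1` of a
given size are then generated by those on the columns outside `f` (`pow_mul_mem_minorsIdeal`).

*Sufficiency* (`exactUpTo_of_depthGE`). Invert a maximal minor `x` of `d 0`. The shortened complex
has length `n - 1` and satisfies the corresponding conditions, so it is exact by induction. Hence
`x` acts nilpotently on every homology class of the given complex, and so does every element of
`I_{r 0}(d 0)`. This ideal contains a weakly regular sequence of length `n`, and the acyclicity
lemma `exactUpTo_of_torsion` shows that the homology vanishes.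

*Necessity.* In an exact complex every ideal `I_{r k}(d k)` has zero annihilator
(`hasZeroAnn_of_exactUpTo`): for `k = 0` this is McCoy's theorem on injective matrices, and for
`k > 0` one inverts the maximal minors of `d 0` and shortens. Since `d (k + 1) * d k = 0`, larger
minors vanish (`minorsIdeal_eq_bot_of_hasZeroAnn`), so that `d k` has rank `r k`. Over a Noetherian
ring an ideal with zero annihilator contains a nonzerodivisor; the product of one from each ideal is
a nonzerodivisor `x` in all of them. The complex over `R / x` is exact one step less far, and the
depth estimate follows by induction (`depthGE_of_exactUpTo`).

Depth is handled through weakly regular sequences, with `le_idealDepth_iff` as the translation.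
-/

open Matrix
open scoped Classical

/-- The ideal generated by the `r × r` minors of a matrix `d` (with `I_0(d) = R`). -/
noncomputable def minorsIdeal {R : Type*} [CommRing R] {p q : Type*} [Fintype p] [Fintype q]
    (d : Matrix p q R) (r : ℕ) : Ideal R :=
  Ideal.span { x | ∃ (f : Fin r → p) (g : Fin r → q),
      Function.Injective f ∧ Function.Injective g ∧ x = (d.submatrix f g).det }

/-- The rank of a map of free modules: the largest size of a nonvanishing minor. -/
noncomputable def matRank {R : Type*} [CommRing R] {p q : Type*} [Fintype p] [Fintype q]
    (d : Matrix p q R) : ℕ :=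
  sSup {r : ℕ | minorsIdeal d r ≠ ⊥}

/-- The depth of an ideal `I ⊆ R`: the supremum of lengths of `R`-regular sequences
contained in `I`, with the convention `depth R = ∞`. -/
noncomputable def idealDepth {R : Type*} [CommRing R] (I : Ideal R) : ℕ∞ :=
  if I = ⊤ then ⊤
  else sSup {n : ℕ∞ | ∃ rs : List R, RingTheory.Sequence.IsRegular R rs ∧
      (∀ x ∈ rs, x ∈ I) ∧ n = rs.length}

/-! ### Ideals of minors -/

section Minors

variable {R : Type*} [CommRing R] {p q s : Type*} [Fintype p] [Fintype q] [Fintype s]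

lemma det_submatrix_mem_minorsIdeal (A : Matrix p q R) {r : ℕ} (f : Fin r → p) (g : Fin r → q) :
    (A.submatrix f g).det ∈ minorsIdeal A r := by
  by_cases hf : Function.Injective f
  · by_cases hg : Function.Injective g
    · exact Ideal.subset_span ⟨f, g, hf, hg, rfl⟩
    · simp only [Function.Injective, not_forall] at hg
      obtain ⟨i, j, hij, hne⟩ := hg
      rw [Matrix.det_zero_of_column_eq hne (fun k => by simp [hij])]
      exact zero_mem _
  · simp only [Function.Injective, not_forall] at hf
    obtain ⟨i, j, hij, hne⟩ := hf
    rw [Matrix.det_zero_of_row_eq hne (by ext k; simp [hij])]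
    exact zero_mem _

lemma minorsIdeal_le_iff {A : Matrix p q R} {r : ℕ} {I : Ideal R} :
    minorsIdeal A r ≤ I ↔ ∀ (f : Fin r → p) (g : Fin r → q), Function.Injective f →
      Function.Injective g → (A.submatrix f g).det ∈ I := by
  unfold minorsIdeal
  rw [Ideal.span_le]
  constructor
  · intro h f g hf hg
    exact h ⟨f, g, hf, hg, rfl⟩
  · rintro h _ ⟨f, g, hf, hg, rfl⟩
    exact h f g hf hg

lemma minorsIdeal_map {S : Type*} [CommRing S] (φ : R →+* S) (A : Matrix p q R) (r : ℕ) :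
    minorsIdeal (A.map φ) r = (minorsIdeal A r).map φ := by
  apply le_antisymm
  · rw [minorsIdeal_le_iff]
    intro f g _ _
    rw [Matrix.submatrix_map, ← RingHom.mapMatrix_apply, ← RingHom.map_det]
    exact Ideal.mem_map_of_mem _ (det_submatrix_mem_minorsIdeal A f g)
  · rw [Ideal.map_le_iff_le_comap, minorsIdeal_le_iff]
    intro f g _ _
    rw [Ideal.mem_comap, RingHom.map_det, RingHom.mapMatrix_apply, ← Matrix.submatrix_map]
    exact det_submatrix_mem_minorsIdeal _ f g

lemma minorsIdeal_submatrix_le {p' q' : Type*} [Fintype p'] [Fintype q'] (A : Matrix p q R)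
    (u : p' → p) (v : q' → q) (r : ℕ) : minorsIdeal (A.submatrix u v) r ≤ minorsIdeal A r := by
  rw [minorsIdeal_le_iff]
  intro f g _ _
  exact det_submatrix_mem_minorsIdeal A (u ∘ f) (v ∘ g)

/-- Each column of `A * B` is a combination of columns of `A`, so by multilinearity of the
determinant the minors of `A * B` are combinations of minors of `A`. -/
lemma minorsIdeal_mul_le (A : Matrix p q R) (B : Matrix q s R) (r : ℕ) :
    minorsIdeal (A * B) r ≤ minorsIdeal A r := by
  rw [minorsIdeal_le_iff]
  intro f g _ _
  have key : ((A * B).submatrix f g)ᵀ =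
      fun i : Fin r => ∑ k : q, B k (g i) • fun j => A (f j) k := by
    ext i j
    simp [Matrix.mul_apply, mul_comm]
  rw [← Matrix.det_transpose, key]
  have := (Matrix.detRowAlternating (n := Fin r) (R := R)).toMultilinearMap.map_sum
    (fun (i : Fin r) (k : q) => B k (g i) • fun j => A (f j) k)
  change Matrix.detRowAlternating.toMultilinearMap _ ∈ _
  rw [this]
  refine Ideal.sum_mem _ fun c _ => ?_
  rw [MultilinearMap.map_smul_univ, smul_eq_mul]
  refine Ideal.mul_mem_left _ _ ?_
  change Matrix.det (A.submatrix f c)ᵀ ∈ _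
  rw [Matrix.det_transpose]
  exact det_submatrix_mem_minorsIdeal A f c

lemma minorsIdeal_eq_bot_of_col (A : Matrix p q R) {r : ℕ} (h : Fintype.card q < r) :
    minorsIdeal A r = ⊥ := by
  rw [eq_bot_iff, minorsIdeal_le_iff]
  intro f g _ hg
  have := Fintype.card_le_of_injective g hg
  simp at this; omega

lemma minorsIdeal_eq_bot_of_row (A : Matrix p q R) {r : ℕ} (h : Fintype.card p < r) :
    minorsIdeal A r = ⊥ := by
  rw [eq_bot_iff, minorsIdeal_le_iff]
  intro f g hf _
  have := Fintype.card_le_of_injective f hf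
  simp at this; omega

lemma minorsIdeal_zero (A : Matrix p q R) : minorsIdeal A 0 = ⊤ := by
  rw [Ideal.eq_top_iff_one]
  have := det_submatrix_mem_minorsIdeal A (r := 0) Fin.elim0 Fin.elim0
  simpa using this

/-- This is Laplace expansion along the first row. -/
lemma minorsIdeal_succ_le (A : Matrix p q R) (r : ℕ) :
    minorsIdeal A (r + 1) ≤ minorsIdeal A r := by
  rw [minorsIdeal_le_iff]
  intro f g _ _
  rw [Matrix.det_succ_row_zero]
  refine Ideal.sum_mem _ fun j _ => Ideal.mul_mem_left _ _ ?_
  rw [Matrix.submatrix_submatrix]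
  exact det_submatrix_mem_minorsIdeal A _ _

lemma minorsIdeal_antitone (A : Matrix p q R) : Antitone (minorsIdeal A) :=
  antitone_nat_of_succ_le (minorsIdeal_succ_le A)

lemma matRank_eq_of {A : Matrix p q R} {r : ℕ} (h : minorsIdeal A r ≠ ⊥)
    (h' : minorsIdeal A (r + 1) = ⊥) : matRank A = r := by
  refine IsGreatest.csSup_eq ⟨h, fun m hm => ?_⟩
  by_contra hlt
  exact hm (eq_bot_iff.2 (h' ▸ minorsIdeal_antitone A (by omega)))

lemma matRank_le_col [Nontrivial R] (A : Matrix p q R) : matRank A ≤ Fintype.card q := by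
  refine csSup_le ⟨0, ?_⟩ fun m hm => ?_
  · simp [minorsIdeal_zero]
  · by_contra h
    exact hm (minorsIdeal_eq_bot_of_col A (by omega))

/-- Here and below, a pair of injections `f`, `h` with complementary ranges encodes a partition of
an index set. -/
lemma sum_eq_sum_add_sum {c r : ℕ} {f : Fin r → q} {h : Fin c → q}
    (hf : Function.Injective f) (hh : Function.Injective h)
    (hfh : ∀ j, j ∈ Set.range h ↔ j ∉ Set.range f) (F : q → R) :
    ∑ j, F j = ∑ i, F (f i) + ∑ i, F (h i) := by
  have h1 : Finset.univ = Finset.univ.image f ∪ Finset.univ.image h := by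
    ext j
    have := hfh j
    simp only [Set.mem_range] at this
    simp only [Finset.mem_univ, Finset.mem_union, Finset.mem_image, true_and, true_iff]
    tauto
  have h2 : Disjoint (Finset.univ.image f) (Finset.univ.image h) := by
    rw [Finset.disjoint_left]
    intro j hj hj'
    simp only [Finset.mem_image, Finset.mem_univ, true_and] at hj hj'
    exact (hfh j).1 hj' hj
  rw [h1, Finset.sum_union h2, Finset.sum_image (fun a _ b _ e => hf e),
    Finset.sum_image (fun a _ b _ e => hh e)]

lemma exists_complement {r m : ℕ} (f : Fin r → Fin m) (hf : Function.Injective f) :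
    ∃ (c : ℕ) (h : Fin c → Fin m), c + r = m ∧ Function.Injective h ∧
      ∀ j, j ∈ Set.range h ↔ j ∉ Set.range f := by
  let e := (Fintype.equivFin {j // j ∉ Set.range f}).symm
  refine ⟨_, fun k => (e k).1, ?_, Subtype.val_injective.comp e.injective, fun j => ?_⟩
  · have h1 : Fintype.card {j // j ∉ Set.range f} = m - r := by
      rw [Fintype.card_subtype_compl, Fintype.card_fin]
      congr 1
      rw [show Fintype.card {j // j ∈ Set.range f} = Fintype.card (Set.range f) from rfl,
        Set.card_range_of_injective hf, Fintype.card_fin]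
    have h2 := Fintype.card_le_of_injective f hf
    simp only [Fintype.card_fin] at h2
    rw [h1]; omega
  · constructor
    · rintro ⟨k, rfl⟩
      exact (e k).2
    · intro hj
      exact ⟨e.symm ⟨j, hj⟩, by simp⟩

/-- If `D * C = 0` and `x` is the maximal minor of `C` on the rows `f`, then the columns of `x • D`
are combinations of the columns of `D` outside `f` (multiply by the adjugate), so the `m × m`
minors of `D`, multiplied by `x ^ m`, lie in the ideal of `m × m` minors of those columns. -/
lemma pow_mul_mem_minorsIdeal {t : Type*} {c r m : ℕ} (D : Matrix p q R) (C : Matrix q t R)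
    (hDC : D * C = 0) (f : Fin r → q) (g : Fin r → t) (h : Fin c → q)
    (hf : Function.Injective f) (hh : Function.Injective h)
    (hfh : ∀ j, j ∈ Set.range h ↔ j ∉ Set.range f) {y : R} (hy : y ∈ minorsIdeal D m) :
    (C.submatrix f g).det ^ m * y ∈ minorsIdeal (D.submatrix id h) m := by
  set x := (C.submatrix f g).det with hx
  have hsum := fun F : q → R => sum_eq_sum_add_sum hf hh hfh F
  have h0 : D.submatrix id f * C.submatrix f g = -(D.submatrix id h * C.submatrix h g) := by
    ext i j
    have := congrFun (congrFun hDC i) (g j)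
    rw [Matrix.mul_apply, hsum] at this
    simp only [Matrix.mul_apply, Matrix.submatrix_apply, id, Matrix.neg_apply]
    exact eq_neg_of_add_eq_zero_left this
  have h1 : x • D.submatrix id f =
      D.submatrix id h * (-(C.submatrix h g * (C.submatrix f g).adjugate)) := by
    have := congrArg (· * (C.submatrix f g).adjugate) h0
    simp only [Matrix.mul_assoc, Matrix.mul_adjugate, Matrix.neg_mul] at this
    rw [Matrix.mul_neg, ← this]
    simp [hx]
  have h2 : ∃ B : Matrix (Fin c) q R, x • D = D.submatrix id h * B := by
    have : ∀ j, ∃ v : Fin c → R, ∀ i, x * D i j = ∑ k, D i (h k) * v k := by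
      intro j
      by_cases hj : j ∈ Set.range f
      · obtain ⟨a, rfl⟩ := hj
        refine ⟨fun k => (-(C.submatrix h g * (C.submatrix f g).adjugate)) k a, fun i => ?_⟩
        have := congrFun (congrFun h1 i) a
        simpa [Matrix.mul_apply] using this
      · obtain ⟨a, rfl⟩ := (hfh j).2 hj
        refine ⟨Pi.single a x, fun i => ?_⟩
        rw [Finset.sum_eq_single a]
        · simp [mul_comm]
        · intro b _ hb
          simp [hb]
        · simp
    choose v hv using this
    refine ⟨Matrix.of fun k j => v j k, ?_⟩
    ext i j
    simpa [Matrix.mul_apply] using hv j i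
  obtain ⟨B, hB⟩ := h2
  have h3 : minorsIdeal D m ≤ Submodule.comap (LinearMap.mulLeft R (x ^ m))
      (minorsIdeal (D.submatrix id h) m) := by
    change Ideal.span _ ≤ _
    rw [Ideal.span, Submodule.span_le]
    rintro _ ⟨u, v, -, -, rfl⟩
    refine minorsIdeal_mul_le _ B m ?_
    rw [← hB]
    have := det_submatrix_mem_minorsIdeal (x • D) u v
    have e : (x • D).submatrix u v = x • D.submatrix u v := rfl
    rw [e, Matrix.det_smul, Fintype.card_fin] at this
    exact this
  exact h3 hy

end Minors

/-! ### Ideals with zero annihilator -/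

section Annihilators

variable {R : Type*} [CommRing R]

/-- The ideal `I` has zero annihilator. Over a Noetherian ring this says that `I` contains a
nonzerodivisor, i.e. that `I` has depth at least one. -/
def HasZeroAnn (I : Ideal R) : Prop := ∀ a : R, (∀ y ∈ I, y * a = 0) → a = 0

/-- The nonregular elements form the union of the finitely many associated primes; by prime
avoidance an ideal of such elements lies in one of them, which is the annihilator of some `a ≠ 0`.
-/
lemma exists_regular_of_hasZeroAnn [IsNoetherianRing R] {I : Ideal R} (hI : HasZeroAnn I) :
    ∃ x ∈ I, IsSMulRegular R x := by
  by_contra! hcon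
  have hsub : (I : Set R) ⊆ ⋃ p ∈ associatedPrimes R R, (p : Set R) := by
    rw [biUnion_associatedPrimes_eq_compl_regular]
    exact hcon
  obtain ⟨P, hP, hIP⟩ := (I.subset_union_prime_finite (associatedPrimes.finite R R) (f := id) 0 0
    fun _ h _ _ ↦ h.1).1 hsub
  obtain ⟨hprime, a, ha⟩ := isAssociatedPrime_iff.1 hP
  have ha0 : a = 0 := hI a fun y hy => by
    have : y ∈ P := hIP hy
    rw [ha] at this
    simpa using this
  apply hprime.ne_top
  rw [ha, ha0]
  ext; simp

lemma hasZeroAnn_of_regular {I : Ideal R} {x : R} (hx : x ∈ I) (hreg : IsSMulRegular R x) :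
    HasZeroAnn I := fun a ha => hreg (by simpa using ha x hx)

lemma HasZeroAnn.ne_bot [Nontrivial R] {I : Ideal R} (hI : HasZeroAnn I) : I ≠ ⊥ := by
  rintro rfl
  exact one_ne_zero (hI 1 fun y hy => by simp_all)

lemma HasZeroAnn.mono {I J : Ideal R} (hI : HasZeroAnn I) (h : I ≤ J) : HasZeroAnn J :=
  fun a ha => hI a fun y hy => ha y (h hy)

/-- An ideal with zero annihilator also has no nonzero element killed by powers of its generators,
since over a Noetherian ring a power of the ideal then kills this element. -/
lemma HasZeroAnn.eq_zero_of_pow [IsNoetherianRing R] {s : Set R} (hI : HasZeroAnn (Ideal.span s))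
    {a : R} (h : ∀ x ∈ s, ∃ N : ℕ, x ^ N * a = 0) : a = 0 := by
  have hle : Ideal.span s ≤ (Ideal.torsionOf R R a).radical := by
    rw [Ideal.span_le]
    intro x hx
    obtain ⟨N, hN⟩ := h x hx
    exact ⟨N, by simpa using hN⟩
  obtain ⟨N, hN⟩ := Ideal.exists_pow_le_of_le_radical_of_fg hle (IsNoetherian.noetherian _)
  have key : ∀ N : ℕ, ∀ a : R, (∀ y ∈ Ideal.span s ^ N, y * a = 0) → a = 0 := by
    intro N
    induction N with
    | zero => intro a ha; simpa using ha 1 (by simp)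
    | succ N ih =>
      intro a ha
      refine hI a fun y hy => ih _ fun z hz => ?_
      rw [← mul_assoc]
      exact ha _ (by rw [pow_succ]; exact Ideal.mul_mem_mul hz hy)
  exact key N a fun y hy => by simpa using hN hy

/-- McCoy's theorem: the maximal minors of an injective matrix have no common annihilator.
If `a` kills all `(s + 1) × (s + 1)` minors but not the `s × s` minor on rows `f` and columns `g`,
then `a` times the vector of cofactors of the columns `g` and one further column is a nonzero
element of the kernel. -/
lemma hasZeroAnn_of_injective {p q : Type*} [Fintype p] [Fintype q] (A : Matrix p q R)
    (hA : ∀ z, A *ᵥ z = 0 → z = 0) : HasZeroAnn (minorsIdeal A (Fintype.card q)) := by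
  intro a ha
  have step : ∀ s < Fintype.card q, (∀ y ∈ minorsIdeal A (s + 1), y * a = 0) →
      ∀ y ∈ minorsIdeal A s, y * a = 0 := by
    intro s hs h
    have hle : minorsIdeal A s ≤ Ideal.torsionOf R R a := by
      rw [minorsIdeal_le_iff]
      intro f g hf hg
      obtain ⟨j₀, hj₀⟩ : ∃ j₀, j₀ ∉ Set.range g := by
        by_contra! hsurj
        have := Fintype.card_le_of_surjective g hsurj
        simp at this; omega
      let G : Fin (s + 1) → q := Fin.cons j₀ g
      have hG : Function.Injective G := Fin.cons_injective_iff.2 ⟨hj₀, hg⟩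
      let c : Fin (s + 1) → R := fun j =>
        (-1) ^ (j : ℕ) * ((A.submatrix f (G ∘ j.succAbove)).det)
      let z : q → R := fun k => ∑ j, if G j = k then a * c j else 0
      have hz : A *ᵥ z = 0 := by
        ext i
        have e1 : (A *ᵥ z) i = a * ∑ j, A i (G j) * c j := by
          simp only [Matrix.mulVec, dotProduct, z, Finset.mul_sum]
          rw [Finset.sum_comm]
          refine Finset.sum_congr rfl fun j _ => ?_
          simp only [mul_ite, mul_zero, Finset.sum_ite_eq, Finset.mem_univ, if_true]
          ring
        have e2 : ∑ j, A i (G j) * c j = (A.submatrix (Fin.cons i f : Fin (s + 1) → p) G).det := by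
          rw [Matrix.det_succ_row_zero]
          refine Finset.sum_congr rfl fun j _ => ?_
          rw [Matrix.submatrix_submatrix]
          have : (Fin.cons i f : Fin (s + 1) → p) ∘ Fin.succ = f := by ext k; simp
          rw [this]
          simp only [c, Matrix.submatrix_apply, Fin.cons_zero]
          ring
        rw [e1, e2, mul_comm]
        exact h _ (det_submatrix_mem_minorsIdeal A _ _)
      have h0 := congrFun (hA z hz) j₀
      have e3 : z j₀ = a * c 0 := by
        simp only [z]
        rw [Finset.sum_eq_single 0]
        · simp [G]
        · intro b _ hb
          rw [if_neg]
          intro hb'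
          exact hb (hG (by simpa [G] using hb'))
        · simp
      have e4 : c 0 = (A.submatrix f g).det := by
        have : G ∘ Fin.succ = g := by ext k; simp [G]
        simp [c, this]
      rw [e3, e4] at h0
      simpa [mul_comm] using h0
    intro y hy
    simpa using hle hy
  have all : ∀ k ≤ Fintype.card q, ∀ y ∈ minorsIdeal A (Fintype.card q - k), y * a = 0 := by
    intro k
    induction k with
    | zero => intro _; simpa using ha
    | succ k ih =>
      intro hk
      refine step _ (by omega) ?_
      rw [show Fintype.card q - (k + 1) + 1 = Fintype.card q - k by omega]
      exact ih (by omega)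
  have := all _ le_rfl 1 (by simp [minorsIdeal_zero])
  simpa using this

end Annihilators

/-! ### Depth -/

section Depth

open RingTheory.Sequence
open scoped Pointwise

variable {R : Type*} [CommRing R]

/-- The ideal `I` contains a weakly regular sequence of length `k`. For a proper ideal such a
sequence is automatically regular, and the unit ideal contains the sequences `1, …, 1`, so this
is the condition `k ≤ depth I` with the convention that the unit ideal has infinite depth. -/
def DepthGE (I : Ideal R) (k : ℕ) : Prop :=
  ∃ rs : List R, rs.length = k ∧ (∀ x ∈ rs, x ∈ I) ∧ IsWeaklyRegular R rs

lemma DepthGE.anti {I : Ideal R} {k l : ℕ} (h : DepthGE I k) (hl : l ≤ k) : DepthGE I l := by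
  obtain ⟨rs, rfl, hmem, hreg⟩ := h
  refine ⟨rs.take l, by simpa using hl, fun x hx => hmem x (List.mem_of_mem_take hx), ?_⟩
  rw [← List.take_append_drop l rs, isWeaklyRegular_append_iff] at hreg
  exact hreg.1

lemma DepthGE.mono {I J : Ideal R} {k : ℕ} (h : DepthGE I k) (hIJ : I ≤ J) : DepthGE J k := by
  obtain ⟨rs, hl, hmem, hreg⟩ := h
  exact ⟨rs, hl, fun x hx => hIJ (hmem x hx), hreg⟩

lemma DepthGE.map_localization {I : Ideal R} {k : ℕ} (h : DepthGE I k) (x : R) :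
    DepthGE (I.map (algebraMap R (Localization.Away x))) k := by
  obtain ⟨rs, hl, hmem, hreg⟩ := h
  refine ⟨rs.map (algebraMap R _), by simpa using hl, ?_,
    hreg.of_isLocalization _ (Submonoid.powers x)⟩
  intro y hy
  obtain ⟨z, hz, rfl⟩ := List.mem_map.1 hy
  exact Ideal.mem_map_of_mem _ (hmem z hz)

/-- The `R`-module `R / xR` in the recursive description of weakly regular sequences is the
quotient ring `R ⧸ (x)`. -/
lemma isWeaklyRegular_cons_quotient (x : R) (rs : List R) :
    IsWeaklyRegular R (x :: rs) ↔ IsSMulRegular R x ∧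
      IsWeaklyRegular (R ⧸ Ideal.span {x}) (rs.map (Ideal.Quotient.mk (Ideal.span {x}))) := by
  rw [isWeaklyRegular_cons_iff]
  refine and_congr_right fun _ => ?_
  have e : x • (⊤ : Submodule R R) = (Ideal.span {x} : Ideal R) := by
    rw [← Submodule.ideal_span_singleton_smul]; simp
  rw [← Ideal.Quotient.algebraMap_eq, isWeaklyRegular_map_algebraMap_iff]
  exact (Submodule.quotEquivOfEq _ _ e).isWeaklyRegular_congr rs

lemma DepthGE.of_quotient {I : Ideal R} {k : ℕ} {x : R} (hx : x ∈ I) (hreg : IsSMulRegular R x)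
    (h : DepthGE (I.map (Ideal.Quotient.mk (Ideal.span {x}))) k) : DepthGE I (k + 1) := by
  obtain ⟨rs, hl, hmem, hwr⟩ := h
  have hlift : ∀ y ∈ I.map (Ideal.Quotient.mk (Ideal.span {x})),
      ∃ z ∈ I, Ideal.Quotient.mk (Ideal.span {x}) z = y := fun y hy =>
    (Ideal.mem_map_iff_of_surjective _ Ideal.Quotient.mk_surjective).1 hy
  obtain ⟨ss, hss, hmem'⟩ : ∃ ss : List R, ss.map (Ideal.Quotient.mk (Ideal.span {x})) = rs ∧
      ∀ y ∈ ss, y ∈ I := by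
    clear hl hwr
    induction rs with
    | nil => exact ⟨[], rfl, by simp⟩
    | cons y rs ih =>
      obtain ⟨ss, h1, h2⟩ := ih fun z hz => hmem z (List.mem_cons_of_mem _ hz)
      obtain ⟨z, hz, rfl⟩ := hlift y (hmem y List.mem_cons_self)
      exact ⟨z :: ss, by simp [h1], by simpa using ⟨hz, h2⟩⟩
  refine ⟨x :: ss, by simp [← hl, ← hss], by simpa using ⟨hx, hmem'⟩, ?_⟩
  rw [isWeaklyRegular_cons_quotient, hss]
  exact ⟨hreg, hwr⟩

lemma DepthGE.exists_regular {I : Ideal R} {k : ℕ} (h : DepthGE I (k + 1)) :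
    ∃ x ∈ I, IsSMulRegular R x := by
  obtain ⟨rs, hl, hmem, hwr⟩ := h
  match rs, hl with
  | x :: rs, _ => exact ⟨x, hmem x List.mem_cons_self, ((isWeaklyRegular_cons_iff R x rs).1 hwr).1⟩

lemma depthGE_one_of_regular {I : Ideal R} {x : R} (hx : x ∈ I) (hreg : IsSMulRegular R x) :
    DepthGE I 1 :=
  ⟨[x], rfl, by simpa using hx, by simpa using hreg⟩

lemma le_idealDepth_iff (I : Ideal R) (k : ℕ) : (k : ℕ∞) ≤ idealDepth I ↔ DepthGE I k := by
  unfold idealDepth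
  split_ifs with hI
  · subst hI
    simp only [le_top, true_iff]
    refine ⟨List.replicate k 1, by simp, by simp, ⟨fun i hi => ?_⟩⟩
    simp
  · constructor
    · intro h
      by_contra hcon
      have hk : k ≠ 0 := by
        rintro rfl
        exact hcon ⟨[], rfl, by simp, .nil R R⟩
      have : sSup {n : ℕ∞ | ∃ rs : List R, IsRegular R rs ∧ (∀ x ∈ rs, x ∈ I) ∧ n = rs.length}
          ≤ ((k - 1 : ℕ) : ℕ∞) := by
        refine sSup_le ?_
        rintro _ ⟨rs, hreg, hmem, rfl⟩
        by_contra hlt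
        have hlt' : k ≤ rs.length := by
          have : k - 1 < rs.length := by exact_mod_cast not_le.1 hlt
          omega
        exact hcon (DepthGE.anti ⟨rs, rfl, hmem, hreg.1⟩ hlt')
      have := h.trans this
      have : k ≤ k - 1 := by exact_mod_cast this
      omega
    · rintro ⟨rs, rfl, hmem, hreg⟩
      refine le_sSup ⟨rs, ⟨hreg, fun htop => hI ?_⟩, hmem, rfl⟩
      have : Ideal.ofList rs ≤ I := Ideal.span_le.2 hmem
      rw [eq_top_iff]
      refine le_trans ?_ this
      rw [htop]
      simp

end Depth

/-! ### Complexes of free modules -/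

section Complexes

variable {R : Type*} [CommRing R] {b : ℕ → ℕ}

/-- The boundaries in degree `i` of the complex `0 → R^{b 0} → R^{b 1} → ⋯` with differentials
`d`; in degree `0` they are zero. -/
def bd (d : ∀ k, Matrix (Fin (b (k + 1))) (Fin (b k)) R) : ∀ i, Submodule R (Fin (b i) → R)
  | 0 => ⊥
  | i + 1 => LinearMap.range (d i).mulVecLin

/-- Exactness of `0 → R^{b 0} → R^{b 1} → ⋯` in all degrees `i < n`. -/
def ExactUpTo (d : ∀ k, Matrix (Fin (b (k + 1))) (Fin (b k)) R) (n : ℕ) : Prop :=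
  ∀ i < n, ∀ z, d i *ᵥ z = 0 → z ∈ bd d i

variable {d : ∀ k, Matrix (Fin (b (k + 1))) (Fin (b k)) R}

lemma mulVec_eq_zero_of_mem_bd (hd : ∀ i, d (i + 1) * d i = 0) {i : ℕ} {z : Fin (b i) → R}
    (hz : z ∈ bd d i) : d i *ᵥ z = 0 := by
  match i, z, hz with
  | 0, z, hz =>
    rw [(Submodule.mem_bot R).1 hz, Matrix.mulVec_zero]
  | i + 1, z, hz =>
    obtain ⟨w, rfl⟩ := hz
    rw [Matrix.mulVecLin_apply, Matrix.mulVec_mulVec, hd, Matrix.zero_mulVec]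

lemma map_mulVec' {S : Type*} [CommRing S] (φ : R →+* S) {p q : Type*} [Fintype q]
    (A : Matrix p q R) (z : q → R) : A.map φ *ᵥ (φ ∘ z) = φ ∘ (A *ᵥ z) := by
  ext i
  exact (RingHom.map_mulVec φ A z i).symm

lemma map_complex {S : Type*} [CommRing S] (φ : R →+* S) (hd : ∀ i, d (i + 1) * d i = 0) (i : ℕ) :
    (d (i + 1)).map φ * (d i).map φ = 0 := by
  rw [← Matrix.map_mul, hd]
  ext; simp

lemma map_mem_bd {S : Type*} [CommRing S] (φ : R →+* S) {i : ℕ} {z : Fin (b i) → R}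
    (hz : z ∈ bd d i) : φ ∘ z ∈ bd (fun k => (d k).map φ) i := by
  match i, z, hz with
  | 0, z, hz =>
    rw [(Submodule.mem_bot R).1 hz]
    refine (Submodule.mem_bot S).2 ?_
    ext; simp
  | i + 1, z, hz =>
    obtain ⟨w, rfl⟩ := hz
    exact ⟨φ ∘ w, by simp [map_mulVec']⟩

/-! ### Reduction modulo a nonzerodivisor -/

section Quotient

variable {x : R}

lemma exists_eq_smul_of_quotient {m : Type*} {w : m → R}
    (h : Ideal.Quotient.mk (Ideal.span {x}) ∘ w = 0) : ∃ u, w = x • u := by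
  have : ∀ i, ∃ u, w i = x * u := fun i => by
    have := congrFun h i
    simp only [Function.comp, Pi.zero_apply, Ideal.Quotient.eq_zero_iff_mem,
      Ideal.mem_span_singleton] at this
    exact this
  choose u hu using this
  exact ⟨u, funext hu⟩

lemma exists_lift_quotient {m : Type*} (z : m → R ⧸ Ideal.span {x}) :
    ∃ w : m → R, Ideal.Quotient.mk (Ideal.span {x}) ∘ w = z := by
  choose w hw using fun i => Ideal.Quotient.mk_surjective (z i)
  exact ⟨w, funext hw⟩

lemma exists_of_mem_bd_quotient {i : ℕ} {w : Fin (b i) → R}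
    (h : Ideal.Quotient.mk (Ideal.span {x}) ∘ w ∈
      bd (fun k => (d k).map (Ideal.Quotient.mk (Ideal.span {x}))) i) :
    ∃ v ∈ bd d i, ∃ u, w = v + x • u := by
  match i, w, h with
  | 0, w, h =>
    obtain ⟨u, hu⟩ := exists_eq_smul_of_quotient ((Submodule.mem_bot _).1 h)
    exact ⟨0, zero_mem _, u, by simpa using hu⟩
  | i + 1, w, h =>
    obtain ⟨v', hv'⟩ := h
    obtain ⟨v, rfl⟩ := exists_lift_quotient v'
    rw [Matrix.mulVecLin_apply, map_mulVec'] at hv'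
    obtain ⟨u, hu⟩ := exists_eq_smul_of_quotient (x := x) (w := w - d i *ᵥ v) (by
      ext j
      have := congrFun hv' j
      simp only [Function.comp] at this
      simp [this])
    exact ⟨d i *ᵥ v, ⟨v, rfl⟩, u, by rw [← hu]; abel⟩

lemma exists_of_cycle_quotient {i : ℕ} {w : Fin (b i) → R}
    (h : (d i).map (Ideal.Quotient.mk (Ideal.span {x})) *ᵥ
      (Ideal.Quotient.mk (Ideal.span {x}) ∘ w) = 0) : ∃ u, d i *ᵥ w = x • u :=
  exists_eq_smul_of_quotient (by rw [← map_mulVec', h])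

lemma cycle_of_smul_cycle (hx : IsSMulRegular R x) {p q : Type*} [Fintype q]
    {A : Matrix p q R} {u : q → R} (h : A *ᵥ (x • u) = 0) : A *ᵥ u = 0 := by
  rw [Matrix.mulVec_smul] at h
  ext i
  exact hx (by simpa using congrFun h i)

/-- Reduction modulo a nonzerodivisor preserves exactness, except in the last degree. -/
lemma ExactUpTo.quotient (hd : ∀ i, d (i + 1) * d i = 0) (hx : IsSMulRegular R x) {n : ℕ}
    (h : ExactUpTo d (n + 1)) :
    ExactUpTo (fun k => (d k).map (Ideal.Quotient.mk (Ideal.span {x}))) n := by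
  intro i hi z hz
  obtain ⟨w, rfl⟩ := exists_lift_quotient z
  obtain ⟨u, hu⟩ := exists_of_cycle_quotient hz
  have hu0 : d (i + 1) *ᵥ u = 0 := cycle_of_smul_cycle hx (by
    rw [← hu, Matrix.mulVec_mulVec, hd, Matrix.zero_mulVec])
  obtain ⟨v, hv⟩ := h (i + 1) (by omega) u hu0
  rw [Matrix.mulVecLin_apply] at hv
  have hc := h i (by omega) (w - x • v) (by
    rw [Matrix.mulVec_sub, Matrix.mulVec_smul, hv, hu, sub_self])
  have := map_mem_bd (Ideal.Quotient.mk (Ideal.span {x})) hc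
  have e : Ideal.Quotient.mk (Ideal.span {x}) ∘ (w - x • v) =
      Ideal.Quotient.mk (Ideal.span {x}) ∘ w := by
    ext j
    have : Ideal.Quotient.mk (Ideal.span {x}) x = 0 :=
      Ideal.Quotient.eq_zero_iff_mem.2 (Ideal.mem_span_singleton_self x)
    simp [this]
  rwa [e] at this

end Quotient

/-- An acyclicity lemma in the style of Peskine and Szpiro: if a weakly regular sequence of length
`n` consists of elements acting nilpotently on the homology in degrees below `n`, then this
homology vanishes. By induction the reduction modulo the first element `x` is exact in degrees
below `n - 1`; hence `x` acts injectively on the homology in degrees below `n`, and it acts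
nilpotently as well. -/
theorem exactUpTo_of_torsion (n : ℕ) : ∀ {R : Type*} [CommRing R] {b : ℕ → ℕ}
    {d : ∀ k, Matrix (Fin (b (k + 1))) (Fin (b k)) R} (_ : ∀ i, d (i + 1) * d i = 0)
    (rs : List R) (_ : n = rs.length) (_ : RingTheory.Sequence.IsWeaklyRegular R rs)
    (_ : ∀ y ∈ rs, ∀ i < n, ∀ z, d i *ᵥ z = 0 → ∃ N : ℕ, y ^ N • z ∈ bd d i),
    ExactUpTo d n := by
  induction n with
  | zero => intro R _ b d _ _ _ _ _ i hi; omega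
  | succ n ih =>
    intro R _ b d hd rs hlen hreg htor
    obtain _ | ⟨x, rs⟩ := rs
    · simp at hlen
    obtain ⟨hx, hrs⟩ := (isWeaklyRegular_cons_quotient x rs).1 hreg
    set π := Ideal.Quotient.mk (Ideal.span {x}) with hπ
    have hπx : π x = 0 := Ideal.Quotient.eq_zero_iff_mem.2 (Ideal.mem_span_singleton_self x)
    have hbar : ExactUpTo (fun k => (d k).map π) n := by
      refine ih (map_complex π hd) (rs.map π) (by simpa using hlen) hrs ?_
      intro y' hy' i hi z hz
      obtain ⟨y, hy, rfl⟩ := List.mem_map.1 hy'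
      obtain ⟨w, rfl⟩ := exists_lift_quotient z
      obtain ⟨u, hu⟩ := exists_of_cycle_quotient hz
      have hu0 : d (i + 1) *ᵥ u = 0 := cycle_of_smul_cycle hx (by
        rw [← hu, Matrix.mulVec_mulVec, hd, Matrix.zero_mulVec])
      obtain ⟨N, v, hv⟩ := htor y (List.mem_cons_of_mem _ hy) (i + 1) (by omega) u hu0
      rw [Matrix.mulVecLin_apply] at hv
      obtain ⟨M, hM⟩ := htor y (List.mem_cons_of_mem _ hy) i (by omega) (y ^ N • w - x • v) (by
        rw [Matrix.mulVec_sub, Matrix.mulVec_smul, Matrix.mulVec_smul, hv, hu, smul_comm, sub_self])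
      refine ⟨M + N, ?_⟩
      have := map_mem_bd π hM
      have e : π ∘ (y ^ M • (y ^ N • w - x • v)) = π y ^ (M + N) • (π ∘ w) := by
        ext j
        simp [hπx, pow_add, mul_assoc]
      rwa [e] at this
    have hinj : ∀ i < n + 1, ∀ z, x • z ∈ bd d i → z ∈ bd d i := by
      intro i hi z hz
      match i, z, hz, hi with
      | 0, z, hz, _ =>
        refine (Submodule.mem_bot R).2 ?_
        have h0 := (Submodule.mem_bot R).1 hz
        ext j
        exact hx (by simpa using congrFun h0 j)
      | i + 1, z, ⟨w, hw⟩, hi =>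
        rw [Matrix.mulVecLin_apply] at hw
        have hcyc : (d i).map π *ᵥ (π ∘ w) = 0 := by
          rw [map_mulVec', hw]
          ext j
          simp [hπx]
        obtain ⟨v, hv, u, rfl⟩ := exists_of_mem_bd_quotient (hbar i (by omega) _ hcyc)
        refine ⟨u, ?_⟩
        rw [Matrix.mulVec_add, mulVec_eq_zero_of_mem_bd hd hv, zero_add, Matrix.mulVec_smul] at hw
        rw [Matrix.mulVecLin_apply]
        ext j
        exact hx (by simpa using congrFun hw j)
    intro i hi z hz
    obtain ⟨N, hN⟩ := htor x List.mem_cons_self i hi z hz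
    induction N with
    | zero => simpa using hN
    | succ N ihN => exact ihN (hinj i hi _ (by rwa [smul_smul, ← pow_succ']))

/-! ### Inverting an element -/

section Localization

variable (x : R)

lemma exists_pow_smul_eq_zero {m : ℕ} {v : Fin m → R}
    (h : algebraMap R (Localization.Away x) ∘ v = 0) : ∃ N : ℕ, x ^ N • v = 0 := by
  have : ∀ i, ∃ N : ℕ, x ^ N * v i = 0 := fun i => by
    have := congrFun h i
    simp only [Function.comp, Pi.zero_apply] at this
    obtain ⟨⟨_, N, rfl⟩, hN⟩ := (IsLocalization.map_eq_zero_iff (Submonoid.powers x) _ _).1 this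
    exact ⟨N, hN⟩
  choose N hN using this
  refine ⟨∑ i, N i, ?_⟩
  ext i
  rw [Pi.smul_apply, smul_eq_mul, Pi.zero_apply]
  obtain ⟨k, hk⟩ := Nat.exists_eq_add_of_le (Finset.single_le_sum (f := N)
    (fun _ _ => Nat.zero_le _) (Finset.mem_univ i))
  rw [hk, add_comm, pow_add, mul_assoc, hN, mul_zero]

lemma exists_lift_localization {m : ℕ} (z : Fin m → Localization.Away x) :
    ∃ (N : ℕ) (w : Fin m → R), algebraMap R (Localization.Away x) ∘ w =
      algebraMap R (Localization.Away x) (x ^ N) • z := by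
  obtain ⟨⟨_, N, rfl⟩, hN⟩ :=
    IsLocalization.exist_integer_multiples_of_finite (Submonoid.powers x) z
  choose w hw using hN
  refine ⟨N, w, funext fun i => ?_⟩
  have := hw i
  simp only [Function.comp, this, Pi.smul_apply, smul_eq_mul, Algebra.smul_def]

lemma exists_pow_smul_mem_bd {i : ℕ} {z : Fin (b i) → R}
    (h : algebraMap R (Localization.Away x) ∘ z ∈
      bd (fun k => (d k).map (algebraMap R (Localization.Away x))) i) :
    ∃ N : ℕ, x ^ N • z ∈ bd d i := by
  match i, z, h with
  | 0, z, h =>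
    obtain ⟨N, hN⟩ := exists_pow_smul_eq_zero x ((Submodule.mem_bot _).1 h)
    exact ⟨N, by rw [hN]; exact zero_mem _⟩
  | i + 1, z, ⟨v, hv⟩ =>
    rw [Matrix.mulVecLin_apply] at hv
    obtain ⟨N, w, hw⟩ := exists_lift_localization x v
    obtain ⟨M, hM⟩ := exists_pow_smul_eq_zero x (v := d i *ᵥ w - x ^ N • z) (by
      have e := map_mulVec' (algebraMap R (Localization.Away x)) (d i) w
      rw [hw, Matrix.mulVec_smul, hv] at e
      ext j
      have := congrFun e j
      simp only [Function.comp, Pi.smul_apply, smul_eq_mul] at this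
      simp [← this])
    refine ⟨M + N, x ^ M • w, ?_⟩
    rw [Matrix.mulVecLin_apply, Matrix.mulVec_smul, pow_add, ← smul_smul, ← sub_eq_zero,
      ← smul_sub, hM]

lemma ExactUpTo.localization {n : ℕ} (h : ExactUpTo d n) :
    ExactUpTo (fun k => (d k).map (algebraMap R (Localization.Away x))) n := by
  intro i hi z hz
  have hunit : ∀ N : ℕ, IsUnit (algebraMap R (Localization.Away x) (x ^ N)) := fun N =>
    IsLocalization.map_units _ (⟨x ^ N, N, rfl⟩ : Submonoid.powers x)
  obtain ⟨N, w, hw⟩ := exists_lift_localization x z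
  obtain ⟨M, hM⟩ := exists_pow_smul_eq_zero x (v := d i *ᵥ w) (by
    rw [← map_mulVec', hw, Matrix.mulVec_smul, hz, smul_zero])
  have h1 := h i hi (x ^ M • w) (by rw [Matrix.mulVec_smul, hM])
  have h2 := map_mem_bd (algebraMap R (Localization.Away x)) h1
  have e : algebraMap R (Localization.Away x) ∘ (x ^ M • w) =
      algebraMap R (Localization.Away x) (x ^ (M + N)) • z := by
    rw [pow_add, map_mul, ← smul_smul, ← hw]
    ext j; simp
  rw [e] at h2
  exact ((bd _ i).smul_mem_iff_of_isUnit (hunit _)).1 h2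

end Localization

end Complexes

universe u

/-! ### Shortening the complex -/

section Shortening

variable {R : Type*} [CommRing R] {b : ℕ → ℕ}

/-- The ranks of the shortened complex `0 → R^c → R^{b 2} → R^{b 3} → ⋯`. -/
def shortB (b : ℕ → ℕ) (c : ℕ) : ℕ → ℕ
  | 0 => c
  | k + 1 => b (k + 2)

/-- The differentials of the shortened complex `0 → R^c → R^{b 2} → R^{b 3} → ⋯`, where `h` selects
`c` of the basis vectors of `R^{b 1}`. When these complete the image of `d 0` to a direct sum
decomposition of `R^{b 1}`, this is the quotient of the given complex by the contractible
subcomplex spanned by `R^{b 0}` and its image. -/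
def shortD (d : ∀ k, Matrix (Fin (b (k + 1))) (Fin (b k)) R) {c : ℕ} (h : Fin c → Fin (b 1)) :
    ∀ k, Matrix (Fin (shortB b c (k + 1))) (Fin (shortB b c k)) R
  | 0 => (d 1).submatrix id h
  | k + 1 => d (k + 2)

variable {d : ∀ k, Matrix (Fin (b (k + 1))) (Fin (b k)) R}

lemma shortD_complex (hd : ∀ i, d (i + 1) * d i = 0) {c : ℕ} (h : Fin c → Fin (b 1)) (i : ℕ) :
    shortD d h (i + 1) * shortD d h i = 0 := by
  match i with
  | 0 =>
    change d 2 * (d 1).submatrix id h = 0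
    have := congrArg (fun M => M.submatrix id h) (hd 1)
    ext i j
    exact congrFun (congrFun this i) j
  | i + 1 => exact hd (i + 2)

lemma isUnit_det_submatrix_id {m r : ℕ} (A : Matrix (Fin m) (Fin r) R) (f : Fin r → Fin m)
    (g : Fin r → Fin r) (hg : Function.Injective g) (hu : IsUnit (A.submatrix f g).det) :
    IsUnit (A.submatrix f id).det := by
  let σ := Equiv.ofBijective g (Finite.injective_iff_bijective.1 hg)
  have e : A.submatrix f g = (A.submatrix f id).submatrix id σ := rfl
  rw [e, Matrix.det_permute'] at hu
  exact isUnit_of_mul_isUnit_right hu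

section

variable {c : ℕ} {f : Fin (b 0) → Fin (b 1)} {h : Fin c → Fin (b 1)}
  (hf : Function.Injective f) (hh : Function.Injective h)
  (hfh : ∀ j, j ∈ Set.range h ↔ j ∉ Set.range f)

include hf hh hfh

lemma mulVec_eq_of_support {m : ℕ} (A : Matrix (Fin m) (Fin (b 1)) R) (z : Fin (b 1) → R)
    (hz : ∀ k, z (f k) = 0) : A *ᵥ z = A.submatrix id h *ᵥ (z ∘ h) := by
  ext i
  simp only [Matrix.mulVec, dotProduct]
  rw [sum_eq_sum_add_sum hf hh hfh]
  simp [hz]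

omit hf hh in
lemma eq_zero_of_support (z : Fin (b 1) → R) (hz : ∀ k, z (f k) = 0) (hz' : z ∘ h = 0) :
    z = 0 := by
  ext j
  by_cases hj : j ∈ Set.range f
  · obtain ⟨k, rfl⟩ := hj
    exact hz k
  · obtain ⟨k, rfl⟩ := (hfh j).2 hj
    exact congrFun hz' k

omit hf in
lemma exists_extension (z' : Fin c → R) :
    ∃ z : Fin (b 1) → R, (∀ k, z (f k) = 0) ∧ z ∘ h = z' := by
  refine ⟨Function.extend h z' 0, fun k => ?_, funext fun k => hh.extend_apply _ _ _⟩
  rw [Function.extend_apply' _ _ _ fun hk => (hfh (f k)).1 hk ⟨k, rfl⟩]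
  rfl

/-- Splitting off the contractible subcomplex `R^{b 0} → R^{b 0}` does not change exactness. -/
lemma exactUpTo_succ_iff_short (hd : ∀ i, d (i + 1) * d i = 0)
    (hu : IsUnit ((d 0).submatrix f id).det) {n : ℕ} :
    ExactUpTo d (n + 1) ↔ ExactUpTo (shortD d h) n := by
  have hM : IsUnit ((d 0).submatrix f id) := (Matrix.isUnit_iff_isUnit_det _).2 hu
  have hrow : ∀ w k, (d 0 *ᵥ w) (f k) = ((d 0).submatrix f id *ᵥ w) k := fun _ _ => rfl
  have hinj : ∀ w, (∀ k, (d 0 *ᵥ w) (f k) = 0) → w = 0 := fun w hw =>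
    Matrix.mulVec_injective_of_isUnit hM (by
      rw [Matrix.mulVec_zero]; ext k; rw [← hrow, hw]; rfl)
  -- Modulo `d 0`, every vector can be made to vanish on the coordinates in the image of `f`.
  have hnorm : ∀ z : Fin (b 1) → R, ∃ w, ∀ k, (z - d 0 *ᵥ w) (f k) = 0 := fun z => by
    obtain ⟨w, hw⟩ := (Matrix.mulVec_surjective_iff_isUnit.2 hM) (z ∘ f)
    refine ⟨w, fun k => ?_⟩
    rw [Pi.sub_apply, hrow, hw]
    simp
  have hdd : ∀ w, d 1 *ᵥ (d 0 *ᵥ w) = 0 := fun w => by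
    rw [Matrix.mulVec_mulVec, hd, Matrix.zero_mulVec]
  constructor
  · intro hex i hi z hz
    match i, z, hz, hi with
    | 0, z', hz, hi =>
      refine (Submodule.mem_bot R).2 ?_
      obtain ⟨z, hz0, rfl⟩ := exists_extension hh hfh z'
      change (d 1).submatrix id h *ᵥ (z ∘ h) = 0 at hz
      rw [← mulVec_eq_of_support hf hh hfh _ z hz0] at hz
      obtain ⟨w, rfl⟩ := hex 1 (by omega) z hz
      rw [Matrix.mulVecLin_apply] at hz0 ⊢
      rw [hinj w hz0, Matrix.mulVec_zero]
      rfl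
    | 1, z, hz, hi =>
      obtain ⟨y, hy⟩ := hex 2 (by omega) z hz
      rw [Matrix.mulVecLin_apply] at hy
      obtain ⟨w, hw⟩ := hnorm y
      refine ⟨(y - d 0 *ᵥ w) ∘ h, ?_⟩
      change (d 1).submatrix id h *ᵥ ((y - d 0 *ᵥ w) ∘ h) = z
      rw [← mulVec_eq_of_support hf hh hfh _ _ hw, Matrix.mulVec_sub, hdd, sub_zero, hy]
    | i + 2, z, hz, hi => exact hex (i + 3) (by omega) z hz
  · intro hex i hi z hz
    match i, z, hz, hi with
    | 0, z, hz, hi =>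
      refine (Submodule.mem_bot R).2 (hinj z fun k => ?_)
      rw [hz]; rfl
    | 1, z, hz, hi =>
      obtain ⟨w, hw⟩ := hnorm z
      refine ⟨w, ?_⟩
      rw [Matrix.mulVecLin_apply]
      have h1 : d 1 *ᵥ (z - d 0 *ᵥ w) = 0 := by rw [Matrix.mulVec_sub, hz, hdd, sub_zero]
      rw [mulVec_eq_of_support hf hh hfh _ _ hw] at h1
      have h2 := (Submodule.mem_bot R).1 (hex 0 (by omega) _ h1)
      exact (sub_eq_zero.1 (eq_zero_of_support hfh _ hw h2)).symm
    | 2, z, hz, hi =>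
      obtain ⟨w', hw'⟩ := hex 1 (by omega) z hz
      obtain ⟨w, hw, rfl⟩ := exists_extension hh hfh w'
      refine ⟨w, ?_⟩
      rw [Matrix.mulVecLin_apply, mulVec_eq_of_support hf hh hfh _ _ hw]
      exact hw'
    | i + 3, z, hz, hi => exact hex (i + 2) (by omega) z hz

end

end Shortening

/-! ### Exactness and depth -/

section Criterion

lemma isUnit_det_submatrix_away {R : Type*} [CommRing R] {m r : ℕ} (A : Matrix (Fin m) (Fin r) R)
    {f : Fin r → Fin m} {g : Fin r → Fin r} (hg : Function.Injective g) {x : R}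
    (hx : x = (A.submatrix f g).det) :
    IsUnit ((A.map (algebraMap R (Localization.Away x))).submatrix f id).det := by
  refine isUnit_det_submatrix_id _ f g hg ?_
  rw [Matrix.submatrix_map, ← RingHom.mapMatrix_apply, ← RingHom.map_det, ← hx]
  exact IsLocalization.Away.algebraMap_isUnit x

/-- Sufficiency of the rank and depth conditions. After inverting a maximal minor of `d 0` the
complex can be shortened and is exact by induction; so the maximal minors of `d 0`, and with them
the elements of a weakly regular sequence of length `n`, act nilpotently on the homology. -/
theorem exactUpTo_of_depthGE (n : ℕ) : ∀ {R : Type u} [CommRing R] {b : ℕ → ℕ}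
    {d : ∀ k, Matrix (Fin (b (k + 1))) (Fin (b k)) R} (_ : ∀ i, d (i + 1) * d i = 0)
    (r : ℕ → ℕ) (_ : 0 < n → r 0 = b 0) (_ : ∀ i, i + 1 < n → r (i + 1) + r i = b (i + 1))
    (_ : ∀ i < n, DepthGE (minorsIdeal (d i) (r i)) (n - i)), ExactUpTo d n := by
  induction n with
  | zero => intro R _ b d _ _ _ _ _ i hi; omega
  | succ n ih =>
    intro R _ b d hd r hr0 hr hdepth
    replace hr0 := hr0 (by omega)
    obtain ⟨rs, hlen, hmem, hreg⟩ := hdepth 0 (by omega)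
    refine exactUpTo_of_torsion (n + 1) hd rs (by simpa using hlen.symm) hreg ?_
    intro y hy i hi z hz
    have hle : minorsIdeal (d 0) (r 0) ≤ Ideal.radical
        ((bd d i).comap (LinearMap.toSpanSingleton R _ z)) := by
      rw [hr0, minorsIdeal_le_iff]
      intro f g hf hg
      set x := ((d 0).submatrix f g).det with hx
      obtain ⟨c, h, hc, hh, hfh⟩ := exists_complement f hf
      let φ := algebraMap R (Localization.Away x)
      have hu := isUnit_det_submatrix_away (d 0) hg hx
      have hux : IsUnit (((d 0).map φ).submatrix f g).det := by
        rw [Matrix.submatrix_map, ← RingHom.mapMatrix_apply, ← RingHom.map_det, ← hx]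
        exact IsLocalization.Away.algebraMap_isUnit x
      have hshort : ExactUpTo (shortD (fun k => (d k).map φ) h) n := by
        refine ih (shortD_complex (map_complex φ hd) h) (fun k => r (k + 1)) ?_ ?_ ?_
        · intro hn
          change r 1 = c
          have := hr 0 (by omega)
          change c + b 0 = b 1 at hc
          change r 1 + r 0 = b 1 at this
          omega
        · intro i hi
          exact hr (i + 1) (by omega)
        · intro i hi
          have h1 := (hdepth (i + 1) (by omega)).map_localization x
          rw [← minorsIdeal_map, Nat.add_sub_add_right] at h1
          refine h1.mono ?_
          match i with
          | 0 =>
            intro w hw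
            have := pow_mul_mem_minorsIdeal ((d 1).map φ) ((d 0).map φ) (map_complex φ hd 0) f g h
              hf hh hfh hw
            exact (Ideal.unit_mul_mem_iff_mem _ (hux.pow _)).1 this
          | i + 1 => exact le_rfl
      have hex := (exactUpTo_succ_iff_short hf hh hfh (map_complex φ hd) hu).2 hshort
      obtain ⟨N, hN⟩ := exists_pow_smul_mem_bd x (hex i hi (φ ∘ z) (by
        rw [map_mulVec', hz]; ext j; simp))
      exact ⟨N, hN⟩
    obtain ⟨N, hN⟩ := hle (hmem y hy)
    exact ⟨N, hN⟩

/-- In an exact complex the ideals of minors of the expected ranks have zero annihilator. For `d 0`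
this is McCoy's theorem; for the other differentials one inverts a maximal minor of `d 0` and
shortens the complex. -/
theorem hasZeroAnn_of_exactUpTo (n : ℕ) : ∀ {R : Type u} [CommRing R] [IsNoetherianRing R]
    {b : ℕ → ℕ} {d : ∀ k, Matrix (Fin (b (k + 1))) (Fin (b k)) R} (_ : ∀ i, d (i + 1) * d i = 0)
    (r : ℕ → ℕ) (_ : r 0 = b 0) (_ : ∀ i, r (i + 1) = b (i + 1) - r i)
    (_ : ExactUpTo d n), ∀ i < n, HasZeroAnn (minorsIdeal (d i) (r i)) := by
  induction n with
  | zero => intro R _ _ b d _ _ _ _ _ i hi; omega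
  | succ n ih =>
    intro R _ _ b d hd r hr0 hr hex i hi
    have hzero : HasZeroAnn (minorsIdeal (d 0) (r 0)) := by
      have := hasZeroAnn_of_injective (d 0) fun z hz =>
        (Submodule.mem_bot R).1 (hex 0 (by omega) z hz)
      rw [Fintype.card_fin] at this
      rwa [hr0]
    match i with
    | 0 => exact hzero
    | i + 1 =>
      intro a ha
      rw [hr0] at hzero
      refine hzero.eq_zero_of_pow ?_
      rintro x ⟨f, g, hf, hg, hx⟩
      obtain ⟨c, h, hc, hh, hfh⟩ := exists_complement f hf
      let φ := algebraMap R (Localization.Away x)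
      have hu := isUnit_det_submatrix_away (d 0) hg hx
      have hshort := (exactUpTo_succ_iff_short hf hh hfh (map_complex φ hd) hu).1
        (hex.localization x)
      have : IsNoetherianRing (Localization.Away x) :=
        IsLocalization.isNoetherianRing (Submonoid.powers x) _ inferInstance
      have hann := ih (shortD_complex (map_complex φ hd) h) (fun k => r (k + 1))
        (by have := hr 0; change r 1 = b 1 - r 0 at this; change c + b 0 = b 1 at hc
            change r 1 = c; omega) (fun k => hr (k + 1))
        hshort i (by omega)
      have hle : minorsIdeal (shortD (fun k => (d k).map φ) h i) (r (i + 1)) ≤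
          minorsIdeal ((d (i + 1)).map φ) (r (i + 1)) := by
        match i with
        | 0 => exact minorsIdeal_submatrix_le ((d 1).map φ) id h _
        | i + 1 => exact le_rfl
      rw [minorsIdeal_map] at hle
      have h0 : φ a = 0 := hann _ fun y hy => by
        have h1 : (minorsIdeal (d (i + 1)) (r (i + 1))).map φ ≤
            Ideal.torsionOf (Localization.Away x) (Localization.Away x) (φ a) := by
          rw [Ideal.map_le_iff_le_comap]
          intro w hw
          rw [Ideal.mem_comap, Ideal.mem_torsionOf_iff, smul_eq_mul, ← map_mul, ha w hw, map_zero]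
        simpa using h1 (hle hy)
      obtain ⟨⟨_, N, rfl⟩, hN⟩ := (IsLocalization.map_eq_zero_iff (Submonoid.powers x) _ _).1 h0
      exact ⟨N, hN⟩

/-- Consecutive differentials cannot have too large ranks: if the minors of `C` of size `r` have
zero annihilator and `D * C = 0`, then all minors of `D` of size larger than `q - r` vanish. -/
lemma minorsIdeal_eq_bot_of_hasZeroAnn {R : Type*} [CommRing R] [IsNoetherianRing R] {p q s : ℕ}
    {D : Matrix (Fin p) (Fin q) R} {C : Matrix (Fin q) (Fin s) R} (hDC : D * C = 0) {r m : ℕ}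
    (hC : HasZeroAnn (minorsIdeal C r)) (hm : q < m + r) : minorsIdeal D m = ⊥ := by
  rw [eq_bot_iff]
  intro y hy
  rw [Ideal.mem_bot]
  refine hC.eq_zero_of_pow ?_
  rintro x ⟨f, g, hf, hg, rfl⟩
  obtain ⟨c, h, hc, hh, hfh⟩ := exists_complement f hf
  refine ⟨m, ?_⟩
  have := pow_mul_mem_minorsIdeal D C hDC f g h hf hh hfh hy
  rwa [minorsIdeal_eq_bot_of_col _ (by rw [Fintype.card_fin]; omega), Ideal.mem_bot] at this

/-- Necessity of the depth conditions, by induction on `n`: divide by an element that is regular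
and lies in all the ideals of minors. -/
theorem depthGE_of_exactUpTo (n : ℕ) : ∀ {R : Type u} [CommRing R] [IsNoetherianRing R]
    {b : ℕ → ℕ} {d : ∀ k, Matrix (Fin (b (k + 1))) (Fin (b k)) R} (_ : ∀ i, d (i + 1) * d i = 0)
    (r : ℕ → ℕ) (_ : r 0 = b 0) (_ : ∀ i, r (i + 1) = b (i + 1) - r i)
    (_ : ExactUpTo d n), ∀ i < n, DepthGE (minorsIdeal (d i) (r i)) (n - i) := by
  induction n with
  | zero => intro R _ _ b d _ _ _ _ _ i hi; omega
  | succ n ih =>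
    intro R _ _ b d hd r hr0 hr hex
    have hann := hasZeroAnn_of_exactUpTo (n + 1) hd r hr0 hr hex
    choose x hxmem hxreg using fun i : Fin (n + 1) => exists_regular_of_hasZeroAnn (hann i i.2)
    have hreg : IsSMulRegular R (∏ i, x i) :=
      Finset.prod_induction _ _ (fun _ _ => IsSMulRegular.mul) (IsSMulRegular.one R)
        fun i _ => hxreg i
    have hmem : ∀ i < n + 1, ∏ i, x i ∈ minorsIdeal (d i) (r i) := fun i hi =>
      Ideal.mem_of_dvd _ (Finset.dvd_prod_of_mem x (Finset.mem_univ ⟨i, hi⟩)) (hxmem ⟨i, hi⟩)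
    intro i hi
    by_cases hin : i < n
    · have h1 := ih (map_complex (Ideal.Quotient.mk (Ideal.span {∏ i, x i})) hd) r hr0 hr
        (hex.quotient hd hreg) i hin
      rw [minorsIdeal_map] at h1
      have := DepthGE.of_quotient (hmem i hi) hreg h1
      rwa [show n - i + 1 = n + 1 - i by omega] at this
    · rw [show n + 1 - i = 1 by omega]
      exact depthGE_one_of_regular (hmem i hi) hreg

end Criterion

/-! ### Ranks and the indexing by integers -/

section Ranks

/-- In an exact complex the rank of `d k` is the alternating sum `b k - b (k - 1) + ⋯ ± b 0`,
given here by a recursion for `r`. No truncation occurs in `b (k + 1) - r k` for `k < n`, as a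
nonzero minor of `d k` has at most `b (k + 1)` rows. -/
theorem matRank_eq_of_exactUpTo {R : Type*} [CommRing R] [IsNoetherianRing R] [Nontrivial R]
    {n : ℕ} {b : ℕ → ℕ} {d : ∀ k, Matrix (Fin (b (k + 1))) (Fin (b k)) R}
    (hd : ∀ i, d (i + 1) * d i = 0) (r : ℕ → ℕ) (hr0 : r 0 = b 0)
    (hr : ∀ i, r (i + 1) = b (i + 1) - r i) (hex : ExactUpTo d n) :
    ∀ i < n, matRank (d i) = r i ∧ r (i + 1) + r i = b (i + 1) := by
  intro i hi
  have hann := hasZeroAnn_of_exactUpTo n hd r hr0 hr hex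
  have hle : r i ≤ b (i + 1) := by
    by_contra hlt
    exact (hann i hi).ne_bot (minorsIdeal_eq_bot_of_row _ (by rw [Fintype.card_fin]; omega))
  refine ⟨matRank_eq_of (hann i hi).ne_bot ?_, by rw [hr]; omega⟩
  match i with
  | 0 => exact minorsIdeal_eq_bot_of_col _ (by rw [Fintype.card_fin]; omega)
  | i + 1 =>
    have := hr i
    exact minorsIdeal_eq_bot_of_hasZeroAnn (hd i) (hann i (by omega)) (by omega)

/-- Exactness of a complex indexed by `ℤ` and concentrated in nonnegative degrees, in terms of its
part in nonnegative degrees. -/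
lemma exact_iff_exactUpTo {R : Type*} [CommRing R] (n : ℕ) (b : ℤ → ℕ)
    (hb : ∀ i : ℤ, i < 0 → b i = 0) (d : ∀ i : ℤ, Matrix (Fin (b (i + 1))) (Fin (b i)) R)
    (hd : ∀ i : ℤ, d (i + 1) * d i = 0) :
    (∀ i : ℤ, i + 1 < (n : ℤ) →
        LinearMap.ker (Matrix.toLin' (d (i + 1))) = LinearMap.range (Matrix.toLin' (d i)))
      ↔ ExactUpTo (b := fun k : ℕ => b k) (fun k : ℕ => d k) n := by
  have hbot : LinearMap.range (Matrix.toLin' (d (-1))) = ⊥ := by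
    have : IsEmpty (Fin (b (-1))) := by rw [hb (-1) (by omega)]; infer_instance
    rw [LinearMap.range_eq_bot]
    exact Subsingleton.elim _ _
  constructor
  · intro h i hi z hz
    match i with
    | 0 =>
      exact (SetLike.ext_iff.1 ((h (-1) (by omega)).trans hbot) z).1 hz
    | i + 1 =>
      exact (SetLike.ext_iff.1 (h i (by omega)) z).1 hz
  · intro h i hi
    refine le_antisymm (fun z hz => ?_) ?_
    · rcases lt_trichotomy i (-1) with hi1 | rfl | hi1
      · have : IsEmpty (Fin (b (i + 1))) := by rw [hb (i + 1) (by omega)]; infer_instance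
        rw [Subsingleton.elim z 0]
        exact zero_mem _
      · rw [hbot]
        exact h 0 (by omega) z hz
      · obtain ⟨k, rfl⟩ := Int.eq_ofNat_of_zero_le (show 0 ≤ i by omega)
        exact h (k + 1) (by omega) z hz
    · rintro _ ⟨w, rfl⟩
      rw [LinearMap.mem_ker, ← LinearMap.comp_apply, ← Matrix.toLin'_mul, hd, map_zero,
        LinearMap.zero_apply]

end Ranks

/-- **Buchsbaum–Eisenbud exactness criterion.**  A complex
`0 → F^0 → F^1 → ⋯ → F^n` of finitely generated free modules over a Noetherian
commutative ring (encoded by ranks `b : ℤ → ℕ` vanishing outside `[0, n]` and matrices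
`d i : F^i → F^{i+1}`) is exact if and only if for every `0 ≤ i < n` one has
`rank F^i = rank d^{i-1} + rank d^i` and `depth I_{rank d^i}(d^i) ≥ n - i`. -/
theorem buchsbaum_eisenbud_exactness_criterion
    {R : Type*} [CommRing R] [IsNoetherianRing R] [Nontrivial R]
    (n : ℕ) (b : ℤ → ℕ) (hb : ∀ i : ℤ, i < 0 ∨ (n : ℤ) < i → b i = 0)
    (d : ∀ i : ℤ, Matrix (Fin (b (i + 1))) (Fin (b i)) R)
    (hcplx : ∀ i : ℤ, d (i + 1) * d i = 0) :
    (∀ i : ℤ, i + 1 < (n : ℤ) →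
        LinearMap.ker (Matrix.toLin' (d (i + 1))) = LinearMap.range (Matrix.toLin' (d i)))
      ↔ (∀ i : ℤ, 0 ≤ i → i < (n : ℤ) →
          b i = matRank (d i) + matRank (d (i - 1)) ∧
          ((n : ℤ) - i).toNat ≤ idealDepth (minorsIdeal (d i) (matRank (d i)))) := by
  have hb0 : ∀ i : ℤ, i < 0 → b i = 0 := fun i hi => hb i (Or.inl hi)
  rw [exact_iff_exactUpTo n b hb0 d hcplx]
  have hneg : matRank (d (0 - 1)) = 0 := by
    have := matRank_le_col (d (0 - 1))
    rw [Fintype.card_fin] at this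
    have := hb0 (0 - 1) (by omega)
    omega
  have hpred : ∀ k : ℕ, matRank (d ((k + 1 : ℕ) - 1)) = matRank (d k) := fun k =>
    congrArg (fun j : ℤ => matRank (d j)) (by push_cast; ring)
  constructor
  · intro hex i hi0 hi
    obtain ⟨k, rfl⟩ := Int.eq_ofNat_of_zero_le hi0
    -- The expected ranks: alternating sums of the ranks of the modules.
    let r : ℕ → ℕ := fun k => Nat.rec (b 0) (fun k s => b (k + 1 : ℕ) - s) k
    have hrank :=
      matRank_eq_of_exactUpTo (b := fun k : ℕ => b k) (d := fun k : ℕ => d k) (fun k => hcplx k)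
          r rfl (fun _ => rfl) hex
    have hk : k < n := by omega
    refine ⟨?_, ?_⟩
    · match k with
      | 0 =>
        have h0 := (hrank 0 hk).1
        change matRank (d 0) = b 0 at h0
        change b 0 = matRank (d 0) + matRank (d (0 - 1))
        omega
      | k + 1 =>
        rw [hpred, (hrank (k + 1) hk).1, (hrank k (by omega)).1]
        exact (hrank k (by omega)).2.symm
    · rw [show ((n : ℤ) - k).toNat = n - k by omega, le_idealDepth_iff, (hrank k hk).1]
      exact depthGE_of_exactUpTo n (b := fun k : ℕ => b k) (d := fun k : ℕ => d k) (fun k => hcplx k)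
          r rfl (fun _ => rfl) hex k hk
  · intro h
    refine exactUpTo_of_depthGE n (b := fun k : ℕ => b k) (d := fun k : ℕ => d k) (fun k => hcplx k)
          (fun k => matRank (d k)) ?_ ?_ ?_
    · intro hn
      have h0 := (h 0 le_rfl (by omega)).1
      change matRank (d 0) = b 0
      omega
    · intro k hk
      have h1 := (h (k + 1 : ℕ) (by omega) (by omega)).1
      rw [hpred] at h1
      exact h1.symm
    · intro k hk
      have h1 := (h k (by omega) (by omega)).2
      rwa [show ((n : ℤ) - k).toNat = n - k by omega, le_idealDepth_iff] at h1
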